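/- Let r ≥ 1 be an integer, let C_i denote the i-th Catalan number, and let F_r(X) = X^r - Σ_{i=1}^{r} C_{i-1}·X^{r-i} over ℂ, with roots ξ : Fin r → ℂ listed with multiplicity, i.e., F_r(X) = Π_{j=1}^{r} (X - ξ_j). For an integer m, let H_m denote the complete homogeneous sum Σ over all tuples (t_1, …, t_r) of nonnegative integers with t_1 + ⋯ + t_r = m of ξ_1^{t_1}·ξ_2^{t_2}⋯ξ_r^{t_r} (so H_0 = 1 and H_m = 0 for m < 0). Then for every integer n ≥ 1 one has Σ_{j=1}^{r} ξ_j^{n} = Σ_{i=1}^{r} i·C_{i-1}·H_{n-i}. -/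

import Mathlib

/-- The geometric series `∑ aⁿ Xⁿ` is the inverse of `1 - a X`. -/
theorem PowerSeries.one_sub_C_mul_X_mul_mk_pow {R : Type*} [CommRing R] (a : R) :
    (1 - C a * X) * PowerSeries.mk (fun n => a ^ n) = 1 := by
  ext n
  cases n with
  | zero => simp [sub_mul, mul_assoc]
  | succ n => simp [sub_mul, mul_assoc, coeff_succ_X_mul, pow_succ', coeff_one]

/-- The coefficients of a product of geometric series are the complete homogeneous sums. -/
theorem PowerSeries.coeff_prod_mk_pow {R : Type*} [CommRing R] {r : ℕ} (ξ : Fin r → R) (m : ℕ) :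
    PowerSeries.coeff m (∏ j, PowerSeries.mk (fun n => ξ j ^ n)) =
      ∑ f ∈ Finset.Nat.antidiagonalTuple r m, ∏ j, ξ j ^ f j := by
  rw [PowerSeries.coeff_prod]
  refine Finset.sum_equiv Finsupp.equivFunOnFinite (fun f => ?_) (fun f _ => by simp)
  simp [Finset.mem_finsuppAntidiag, Finset.Nat.mem_antidiagonalTuple]

open Polynomial in
/-- Logarithmic derivative of `∏ (1 - ξ j X)`, with the inverse written as a product of geometric
series. -/
theorem Polynomial.derivative_prod_one_sub_mul_prod_mk_pow {R ι : Type*} [CommRing R] [Fintype ι]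
    (ξ : ι → R) :
    ((derivative (∏ j, (1 - C (ξ j) * X : R[X])) : R[X]) : PowerSeries R) *
        ∏ j, PowerSeries.mk (fun n => ξ j ^ n) =
      -∑ j, PowerSeries.C (ξ j) * PowerSeries.mk (fun n => ξ j ^ n) := by
  classical
  rw [derivative_prod_finset, ← coeToPowerSeries.ringHom_apply, map_sum, Finset.sum_mul,
    ← Finset.sum_neg_distrib]
  refine Finset.sum_congr rfl fun i _ => ?_
  rw [← Finset.mul_prod_erase Finset.univ _ (Finset.mem_univ i), map_mul, map_prod]
  have h : (∏ j ∈ Finset.univ.erase i,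
        coeToPowerSeries.ringHom (1 - C (ξ j) * X : R[X])) *
      ∏ j ∈ Finset.univ.erase i, PowerSeries.mk (fun n => ξ j ^ n) = 1 := by
    rw [← Finset.prod_mul_distrib]
    refine Finset.prod_eq_one fun j _ => ?_
    simpa using PowerSeries.one_sub_C_mul_X_mul_mk_pow (ξ j)
  have hd : coeToPowerSeries.ringHom (derivative (1 - C (ξ i) * X : R[X])) =
      -PowerSeries.C (ξ i) := by
    simp [Polynomial.coe_neg]
  rw [hd]
  linear_combination (-PowerSeries.C (ξ i) * PowerSeries.mk (fun n => ξ i ^ n)) * h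

open Polynomial in
/-- Reversal of a factored monic polynomial, given through its values. -/
theorem Polynomial.prod_one_sub_eq_of_eval_eq {K : Type*} [Field K] [Infinite K] {r : ℕ}
    (ξ : Fin r → K) (c : ℕ → K)
    (h : ∀ x : K, x ^ r - ∑ i ∈ Finset.Icc 1 r, c i * x ^ (r - i) = ∏ j, (x - ξ j)) :
    ∏ j, (1 - C (ξ j) * X) = 1 - ∑ i ∈ Finset.Icc 1 r, C (c i) * X ^ i := by
  refine Polynomial.funext fun y => ?_
  simp only [eval_prod, eval_sub, eval_one, eval_mul, eval_C, eval_X, eval_finsetSum, eval_pow]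
  rcases eq_or_ne y 0 with rfl | hy
  · have : ∑ i ∈ Finset.Icc 1 r, c i * (0 : K) ^ i = 0 :=
      Finset.sum_eq_zero fun i hi => by
        simp [Nat.one_le_iff_ne_zero.mp (Finset.mem_Icc.mp hi).1]
    simp [this]
  · have hprod : ∏ j, (1 - ξ j * y) = y ^ r * ∏ j, (y⁻¹ - ξ j) := by
      rw [← Fin.prod_const, ← Finset.prod_mul_distrib]
      refine Finset.prod_congr rfl fun j _ => ?_
      field_simp
    rw [hprod, ← h, mul_sub, ← mul_pow, mul_inv_cancel₀ hy, one_pow, Finset.mul_sum]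
    congr 1
    refine Finset.sum_congr rfl fun i hi => ?_
    obtain ⟨k, rfl⟩ := Nat.exists_eq_add_of_le (Finset.mem_Icc.mp hi).2
    rw [Nat.add_sub_cancel_left, pow_add, inv_pow]
    field_simp


/-- The identity from the proof of Proposition 3.9: the `n`-th power sum of the roots
of `F_r(X) = X^r - ∑_{i=1}^r C_{i-1} X^{r-i}` equals `∑_{i=1}^r i C_{i-1} H_{n-i}`,
where `H_m` is the complete homogeneous symmetric sum of degree `m` in the roots. -/
theorem power_sum_eq_weighted_complete_homogeneous (r : ℕ) (hr : 1 ≤ r)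
    (ξ : Fin r → ℂ)
    (hξ : ∀ X : ℂ,
      X ^ r - ∑ i ∈ Finset.Icc 1 r, (catalan (i - 1) : ℂ) * X ^ (r - i) =
        ∏ j : Fin r, (X - ξ j))
    (H : ℤ → ℂ)
    (hH_neg : ∀ m : ℤ, m < 0 → H m = 0)
    (hH : ∀ m : ℕ,
      H (m : ℤ) = ∑ f ∈ Finset.Nat.antidiagonalTuple r m, ∏ j : Fin r, ξ j ^ f j) :
    ∀ n : ℕ, 1 ≤ n →
      ∑ j : Fin r, ξ j ^ n =
        ∑ i ∈ Finset.Icc 1 r, (i : ℂ) * (catalan (i - 1) : ℂ) * H ((n : ℤ) - (i : ℤ)) := by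
  intro n hn
  obtain ⟨n, rfl⟩ := Nat.exists_eq_add_of_le' hn
  have hlog := Polynomial.derivative_prod_one_sub_mul_prod_mk_pow ξ
  rw [Polynomial.prod_one_sub_eq_of_eval_eq ξ (fun i => (catalan (i - 1) : ℂ)) hξ] at hlog
  have hder : ((Polynomial.derivative (1 - ∑ i ∈ Finset.Icc 1 r,
      Polynomial.C (catalan (i - 1) : ℂ) * Polynomial.X ^ i) : Polynomial ℂ) : PowerSeries ℂ) =
      -∑ i ∈ Finset.Icc 1 r,
        PowerSeries.C ((i : ℂ) * (catalan (i - 1) : ℂ)) * PowerSeries.X ^ (i - 1) := by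
    rw [← Polynomial.coeToPowerSeries.ringHom_apply]
    simp only [Polynomial.derivative_sub, Polynomial.derivative_one, zero_sub,
      Polynomial.derivative_C_mul_X_pow, map_neg, map_sum, map_mul,
      map_pow]
    simp [mul_comm]
  rw [hder, neg_mul, neg_inj] at hlog
  have hcoeff := congrArg (PowerSeries.coeff n) hlog
  simp only [Finset.sum_mul, map_sum, mul_assoc, PowerSeries.coeff_C_mul, PowerSeries.coeff_mk,
    PowerSeries.coeff_X_pow_mul', PowerSeries.coeff_prod_mk_pow, map_mul] at hcoeff
  simp only [pow_succ', ← hcoeff, mul_assoc]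
  refine Finset.sum_congr rfl fun i hi => ?_
  have hi1 := (Finset.mem_Icc.mp hi).1
  congr 2
  split_ifs with hle
  · rw [← hH]
    congr 1
    omega
  · rw [hH_neg _ (by omega)]
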